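/- arXiv:1606.06470 — 2 statements merged into one kernel-verified Lean document; each statement's English description precedes it below -/
import Mathlib

section
/- Let μ be a measure on ℂ, w : ℂ → ℂ measurable, α₁, α₂, α₃ ∈ ℂ pairwise distinct, and ℓ ≥ 1 an integer. Assume μ-almost every h satisfies h ∉ {0, α₁, α₂, α₃}, and that for every n = (n₁,n₂) ∈ ℤ² and every integer m with |m| ≤ ℓ+1 the function h ↦ w(h)·h^m·(h−α₁)^{n₁−N(n)}·(h−α₂)^{n₂−N(n)}·(h−α₃)^{−N(n)} (integer powers, N(n)=⌊(n₁+n₂+2)/3⌋) is μ-integrable; let ω_m(n) denote its integral. For k ∈ {−1, 0, 1} let D_k(n) = det(ω_{k−a+b}(n))_{a,b=1,…,ℓ+k}, with the convention D_{−1}(n) = 1 when ℓ = 1. Assume D₀(n) ≠ 0 and D₁(n) ≠ 0 for every n ∈ ℤ². Then the function u : ℤ² → ℂ defined by u(n) = D_{−1}(n)/D₀(n) for n ∈ Λ⁺ and u(n) = −D₀(n)/D₁(n) for n ∈ Λ⁻ (arbitrary on the remaining points) satisfies the honeycomb field equations with constants Γ₁ = α₂−α₃, Γ₂ = α₃−α₁,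 Γ₃ = α₁−α₂; in particular all the required differences are nonzero. -/
open MeasureTheory

/-- The three honeycomb edge vectors in `ℤ²`. -/
def eHL : Fin 3 → ℤ × ℤ := ![(1, 0), (0, 1), (-1, -1)]

/-- `u` satisfies the honeycomb field equations with constants `Γ`. -/
def HoneycombEqs (Γ : Fin 3 → ℂ) (u : ℤ × ℤ → ℂ) : Prop :=
  (∀ m : ℤ × ℤ, (m.1 + m.2) % 3 = 0 →
    (∀ i : Fin 3, u m - u (m + eHL i) ≠ 0) ∧
    ∑ i : Fin 3, Γ i / (u m - u (m + eHL i)) = 0) ∧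
  (∀ m : ℤ × ℤ, (m.1 + m.2) % 3 = 1 →
    (∀ i : Fin 3, u m - u (m - eHL i) ≠ 0) ∧
    ∑ i : Fin 3, Γ i / (u m - u (m - eHL i)) = 0)

/-- `N(n) = ⌊(n₁ + n₂ + 2)/3⌋`. -/
def NHL (n : ℤ × ℤ) : ℤ := (n.1 + n.2 + 2) / 3

open Polynomial in
/-- Pairing of a sequence with a polynomial. -/
noncomputable def PHL (c : ℤ → ℂ) (s : ℤ) (p : ℂ[X]) : ℂ := p.sum fun b x => x * c (s + b)

open Polynomial in
theorem PHL_range (c : ℤ → ℂ) (s : ℤ) (p : ℂ[X]) (N : ℕ) (hp : ∀ m, N ≤ m → p.coeff m = 0) :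
    PHL c s p = ∑ b ∈ Finset.range N, p.coeff b * c (s + b) := by
  unfold PHL
  rw [Polynomial.sum_def]
  apply Finset.sum_subset
  · intro b hb
    rw [Polynomial.mem_support_iff] at hb
    rw [Finset.mem_range]
    by_contra h
    exact hb (hp b (by omega))
  · intro b _ hb
    rw [Polynomial.mem_support_iff, not_not] at hb
    simp [hb]

open Polynomial in
theorem PHL_sub (c : ℤ → ℂ) (s : ℤ) (p q : ℂ[X]) : PHL c s (p - q) = PHL c s p - PHL c s q := by
  have key : ∃ N : ℕ, (∀ m, N ≤ m → p.coeff m = 0) ∧ (∀ m, N ≤ m → q.coeff m = 0) :=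
    ⟨p.natDegree + q.natDegree + 1,
      fun m hm => coeff_eq_zero_of_natDegree_lt (by omega),
      fun m hm => coeff_eq_zero_of_natDegree_lt (by omega)⟩
  obtain ⟨N, h1, h2⟩ := key
  rw [PHL_range c s p N h1, PHL_range c s q N h2,
    PHL_range c s (p - q) N (fun m hm => by simp [h1 m hm, h2 m hm]), ← Finset.sum_sub_distrib]
  exact Finset.sum_congr rfl fun b _ => by rw [coeff_sub]; ring

open Polynomial in
theorem PHL_C_mul (c : ℤ → ℂ) (s : ℤ) (a : ℂ) (p : ℂ[X]) : PHL c s (C a * p) = a * PHL c s p := by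
  have h1 : ∀ m, p.natDegree + 1 ≤ m → p.coeff m = 0 :=
    fun m hm => coeff_eq_zero_of_natDegree_lt (by omega)
  rw [PHL_range c s p _ h1,
    PHL_range c s (C a * p) (p.natDegree + 1) (fun m hm => by simp [h1 m hm]), Finset.mul_sum]
  exact Finset.sum_congr rfl fun b _ => by rw [coeff_C_mul]; ring

open Polynomial in
theorem PHL_X_mul (c : ℤ → ℂ) (s : ℤ) (p : ℂ[X]) : PHL c s (X * p) = PHL c (s + 1) p := by
  have h1 : ∀ m, p.natDegree + 1 ≤ m → p.coeff m = 0 :=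
    fun m hm => coeff_eq_zero_of_natDegree_lt (by omega)
  rw [PHL_range c (s + 1) p _ h1,
    PHL_range c s (X * p) (p.natDegree + 1 + 1) (fun m hm => by
      obtain ⟨m', rfl⟩ : ∃ m', m = m' + 1 := ⟨m - 1, by omega⟩
      rw [coeff_X_mul]; exact h1 _ (by omega)), Finset.sum_range_succ']
  simp only [coeff_X_mul, coeff_X_mul_zero, zero_mul, add_zero]
  refine Finset.sum_congr rfl fun b _ => ?_
  congr 2
  push_cast
  ring

open Polynomial in
theorem PHL_shift (c c' : ℤ → ℂ) (a : ℂ) (s : ℤ) (p : ℂ[X]) (N : ℕ)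
    (hp : ∀ m, N ≤ m → p.coeff m = 0)
    (h : ∀ b : ℕ, b < N → c' (s + b) = c (s + b + 1) - a * c (s + b)) :
    PHL c s ((X - C a) * p) = PHL c' s p := by
  rw [sub_mul, PHL_sub, PHL_C_mul, PHL_X_mul, PHL_range c _ p N hp, PHL_range c _ p N hp,
    PHL_range c' _ p N hp, Finset.mul_sum, ← Finset.sum_sub_distrib]
  refine Finset.sum_congr rfl fun b hb => ?_
  rw [h b (Finset.mem_range.1 hb), add_right_comm s 1 (b : ℤ)]
  ring

open Polynomial in
theorem PHL_nondeg (c : ℤ → ℂ) (t : ℤ) (N : ℕ)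
    (hdet : Matrix.det (Matrix.of fun a b : Fin N => c (t - (a : ℤ) + (b : ℤ))) ≠ 0)
    (p : ℂ[X]) (hp : ∀ m, N ≤ m → p.coeff m = 0)
    (h : ∀ a : ℕ, a < N → PHL c (t - a) p = 0) : p = 0 := by
  have := Matrix.eq_zero_of_mulVec_eq_zero hdet (v := fun b : Fin N => p.coeff b) (by
    ext a
    have h1 := h a a.2
    rw [PHL_range c _ p N hp, ← Fin.sum_univ_eq_sum_range (fun b => p.coeff b * c (t - a + b))] at h1
    simp only [Matrix.mulVec, dotProduct, Matrix.of_apply, Pi.zero_apply]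
    rw [← h1]
    exact Finset.sum_congr rfl fun b _ => mul_comm _ _)
  ext m
  by_cases hm : m < N
  · simpa using congrFun this ⟨m, hm⟩
  · simpa using hp m (by omega)

open Polynomial in
theorem PHL_solve (c : ℤ → ℂ) (t : ℤ) (N : ℕ)
    (hdet : Matrix.det (Matrix.of fun a b : Fin N => c (t - (a : ℤ) + (b : ℤ))) ≠ 0)
    (y : Fin N → ℂ) :
    ∃ p : ℂ[X], (∀ m, N ≤ m → p.coeff m = 0) ∧ (∀ a : Fin N, PHL c (t - a) p = y a) ∧
      ∀ b : Fin N, p.coeff b =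
        ((Matrix.of fun a b : Fin N => c (t - (a : ℤ) + (b : ℤ)))⁻¹.mulVec y) b := by
  set A := Matrix.of fun a b : Fin N => c (t - (a : ℤ) + (b : ℤ)) with hA
  let x := A⁻¹.mulVec y
  let p : ℂ[X] := ∑ b : Fin N, C (x b) * X ^ (b : ℕ)
  have hc : ∀ b : Fin N, p.coeff b = x b := by
    intro b
    simp only [p, finsetSum_coeff, coeff_C_mul, coeff_X_pow]
    rw [Finset.sum_eq_single b]
    · simp
    · intro b' _ hb'
      have : (b : ℕ) ≠ b' := fun h => hb' (Fin.ext h.symm)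
      simp [this]
    · simp
  have hz : ∀ m, N ≤ m → p.coeff m = 0 := by
    intro m hm
    simp only [p, finsetSum_coeff, coeff_C_mul, coeff_X_pow]
    refine Finset.sum_eq_zero fun b _ => ?_
    have : m ≠ (b : ℕ) := by have := b.2; omega
    simp [this]
  refine ⟨p, hz, fun a => ?_, hc⟩
  rw [PHL_range c _ p N hz, ← Fin.sum_univ_eq_sum_range (fun b => p.coeff b * c (t - a + b))]
  have h2 : A.mulVec x = y := by
    simp only [x, Matrix.mulVec_mulVec]
    rw [Matrix.mul_nonsing_inv _ (isUnit_iff_ne_zero.2 hdet), Matrix.one_mulVec]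
  rw [← h2]
  simp only [Matrix.mulVec, dotProduct, hA, Matrix.of_apply]
  exact Finset.sum_congr rfl fun b _ => by rw [hc, mul_comm]

open Polynomial in
theorem PHL_solve_delta (c : ℤ → ℂ) (t : ℤ) (k : ℕ)
    (hdet : Matrix.det (Matrix.of fun a b : Fin (k + 1) => c (t - (a : ℤ) + (b : ℤ))) ≠ 0) :
    ∃ p : ℂ[X], (∀ m, k + 1 ≤ m → p.coeff m = 0) ∧ PHL c t p = 1 ∧
      (∀ a : ℕ, a < k → PHL c (t - 1 - a) p = 0) ∧
      p.coeff k = (-1) ^ k * Matrix.det (Matrix.of fun a b : Fin k => c (t - 1 - (a : ℤ) + (b : ℤ)))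
        / Matrix.det (Matrix.of fun a b : Fin (k + 1) => c (t - (a : ℤ) + (b : ℤ))) := by
  obtain ⟨p, h1, h2, h3⟩ := PHL_solve c t (k + 1) hdet (Pi.single 0 1)
  refine ⟨p, h1, ?_, ?_, ?_⟩
  · simpa using h2 0
  · intro a ha
    have := h2 ⟨a + 1, by omega⟩
    rw [Pi.single_eq_of_ne (by simp [Fin.ext_iff])] at this
    rw [← this]
    congr 1
    push_cast
    ring
  · have := h3 (Fin.last k)
    rw [Fin.val_last] at this
    rw [this, Matrix.mulVec_single_one, Matrix.inv_def]
    simp only [Matrix.col_apply, Matrix.smul_apply, Matrix.adjugate_fin_succ_eq_det_submatrix,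
      Ring.inverse_eq_inv', smul_eq_mul, Fin.val_last, Fin.val_zero, zero_add]
    have e : (Matrix.of fun a b : Fin (k + 1) => c (t - (a : ℤ) + (b : ℤ))).submatrix
        (Fin.succAbove 0) (Fin.succAbove (Fin.last k)) =
        Matrix.of fun a b : Fin k => c (t - 1 - (a : ℤ) + (b : ℤ)) := by
      ext a b
      simp only [Matrix.submatrix_apply, Matrix.of_apply, Fin.succAbove_last, Fin.zero_succAbove,
        Fin.val_succ, Fin.val_castSucc]
      congr 1
      push_cast
      ring
    rw [e]
    ring

open Polynomial in
theorem PHL_monic (c : ℤ → ℂ) (N : ℕ)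
    (hdet : Matrix.det (Matrix.of fun a b : Fin N => c (0 - (a : ℤ) + (b : ℤ))) ≠ 0) :
    ∃ G : ℂ[X], (∀ m, N + 1 ≤ m → G.coeff m = 0) ∧ G.coeff N = 1 ∧
      ∀ a : ℕ, a < N → PHL c (0 - a) G = 0 := by
  obtain ⟨p, h1, h2, h3⟩ := PHL_solve c 0 N hdet (fun a => PHL c (0 - a) (X ^ N))
  refine ⟨X ^ N - p, fun m hm => ?_, ?_, fun a ha => ?_⟩
  · rw [coeff_sub, h1 m (by omega), coeff_X_pow, if_neg (by omega), sub_zero]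
  · rw [coeff_sub, h1 N le_rfl, coeff_X_pow, if_pos rfl, sub_zero]
  · rw [PHL_sub, h2 ⟨a, ha⟩, sub_self]

open Polynomial in
theorem PHL_core (k : ℕ) (x y : ℂ) (c cj ck d : ℤ → ℂ)
    (Rj : ∀ m : ℤ, -k - 2 ≤ m → m ≤ k + 1 → cj m = c (m + 1) - x * c m)
    (Rk : ∀ m : ℤ, -k - 2 ≤ m → m ≤ k + 1 → ck m = c (m + 1) - y * c m)
    (Rd : ∀ m : ℤ, -k - 2 ≤ m → m ≤ k + 1 → d m = ck (m + 1) - x * ck m)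
    (hj : Matrix.det (Matrix.of fun a b : Fin (k + 1) => cj (0 - (a : ℤ) + (b : ℤ))) ≠ 0)
    (hk : Matrix.det (Matrix.of fun a b : Fin (k + 1) => ck (0 - (a : ℤ) + (b : ℤ))) ≠ 0)
    (p q G : ℂ[X])
    (hp : ∀ m, k + 1 ≤ m → p.coeff m = 0) (hp1 : PHL d 0 p = 1)
    (hp2 : ∀ a : ℕ, a < k → PHL d (0 - 1 - a) p = 0)
    (hq : ∀ m, k + 1 + 1 ≤ m → q.coeff m = 0) (hq1 : PHL c 1 q = 1)
    (hq2 : ∀ a : ℕ, a < k + 1 → PHL c (1 - 1 - a) q = 0)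
    (hG : ∀ m, k + 1 + 1 ≤ m → G.coeff m = 0) (hG1 : G.coeff (k + 1) = 1)
    (hG2 : ∀ a : ℕ, a < k + 1 → PHL ck (0 - a) G = 0) :
    p.coeff k - q.coeff (k + 1) ≠ 0 ∧
    (X - C x) * p - q = C (p.coeff k - q.coeff (k + 1)) * G := by
  have main : (X - C x) * p - q = C (p.coeff k - q.coeff (k + 1)) * G := by
    rw [← sub_eq_zero]
    refine PHL_nondeg ck 0 (k + 1) hk _ ?_ ?_
    · intro m hm
      obtain ⟨m', rfl⟩ : ∃ m', m = m' + 1 := ⟨m - 1, by omega⟩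
      simp only [coeff_sub, sub_mul, coeff_X_mul, coeff_C_mul]
      rw [hp _ hm]
      rcases Nat.eq_or_lt_of_le hm with h | h
      · obtain rfl : m' = k := by omega
        rw [hG1]; ring
      · rw [hp m' (by omega), hG _ (by omega), hq _ (by omega)]; ring
    · intro a ha
      rw [PHL_sub, PHL_sub, PHL_C_mul, hG2 a ha,
        PHL_shift ck d x _ p (k + 1) hp (fun b hb => Rd _ (by omega) (by omega)),
        ← PHL_shift c ck y _ q (k + 1 + 1) hq (fun b hb => Rk _ (by omega) (by omega)),
        sub_mul, PHL_sub, PHL_X_mul, PHL_C_mul]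
      have e1 := hq2 a ha
      rw [sub_self] at e1
      rw [e1]
      rcases a with _ | a
      · simp [hp1, hq1]
      · have e2 := hp2 a (by omega)
        have e3 := hq2 a (by omega)
        have e4 : (0 : ℤ) - ((a + 1 : ℕ) : ℤ) = 0 - 1 - a := by push_cast; ring
        have e5 : (0 : ℤ) - 1 - a + 1 = 1 - 1 - a := by ring
        rw [e4, e2, e5, e3]; ring
  refine ⟨fun h0 => ?_, main⟩
  rw [h0, C_0, zero_mul, sub_eq_zero] at main
  have : p = 0 := by
    refine PHL_nondeg cj 0 (k + 1) hj _ hp ?_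
    intro a ha
    rw [← PHL_shift c cj x _ p (k + 1) hp (fun b hb => Rj _ (by omega) (by omega)), main]
    have := hq2 a ha
    rwa [sub_self] at this
  rw [this] at hp1
  simp [PHL] at hp1

theorem HL_rel (μ : Measure ℂ) (w : ℂ → ℂ) (α : Fin 3 → ℂ) (ℓ : ℕ)
    (hae : ∀ᵐ h ∂μ, h ≠ 0 ∧ ∀ i : Fin 3, h ≠ α i)
    (hint : ∀ n : ℤ × ℤ, ∀ m : ℤ, |m| ≤ (ℓ : ℤ) + 1 →
      Integrable (fun h : ℂ =>
        w h * h ^ m * (h - α 0) ^ (n.1 - NHL n) * (h - α 1) ^ (n.2 - NHL n)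
          * (h - α 2) ^ (-NHL n)) μ)
    (ω : ℤ → ℤ × ℤ → ℂ)
    (hω : ∀ (m : ℤ) (n : ℤ × ℤ),
      ω m n = ∫ h : ℂ,
        w h * h ^ m * (h - α 0) ^ (n.1 - NHL n) * (h - α 1) ^ (n.2 - NHL n)
          * (h - α 2) ^ (-NHL n) ∂μ)
    (n : ℤ × ℤ) (hn : (n.1 + n.2) % 3 ≠ 0) (i : Fin 3) (m : ℤ) (h1 : -ℓ - 1 ≤ m) (h2 : m ≤ ℓ) :
    ω m (n + eHL i) = ω (m + 1) n - α i * ω m n := by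
  rw [hω, hω, hω, ← integral_const_mul, ← integral_sub (hint n (m + 1) (abs_le.2 ⟨by omega, by omega⟩))
    ((hint n m (abs_le.2 ⟨by omega, by omega⟩)).const_mul _)]
  apply integral_congr_ae
  filter_upwards [hae] with h hh
  have a0 : h - α 0 ≠ 0 := sub_ne_zero.2 (hh.2 0)
  have a1 : h - α 1 ≠ 0 := sub_ne_zero.2 (hh.2 1)
  have a2 : h - α 2 ≠ 0 := sub_ne_zero.2 (hh.2 2)
  rw [zpow_add_one₀ hh.1]
  fin_cases i
  · have e1 : (n + eHL 0).1 - NHL (n + eHL 0) = (n.1 - NHL n) + 1 := by simp [eHL, NHL]; omega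
    have e2 : (n + eHL 0).2 - NHL (n + eHL 0) = (n.2 - NHL n) := by simp [eHL, NHL]; omega
    have e3 : -NHL (n + eHL 0) = -NHL n := by simp [eHL, NHL]; omega
    simp only [Fin.zero_eta]
    rw [e1, e2, e3, zpow_add_one₀ a0]; ring
  · have e1 : (n + eHL 1).1 - NHL (n + eHL 1) = (n.1 - NHL n) := by simp [eHL, NHL]; omega
    have e2 : (n + eHL 1).2 - NHL (n + eHL 1) = (n.2 - NHL n) + 1 := by simp [eHL, NHL]; omega
    have e3 : -NHL (n + eHL 1) = -NHL n := by simp [eHL, NHL]; omega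
    simp only [Fin.mk_one]
    rw [e1, e2, e3, zpow_add_one₀ a1]; ring
  · have e1 : (n + eHL 2).1 - NHL (n + eHL 2) = (n.1 - NHL n) := by simp [eHL, NHL]; omega
    have e2 : (n + eHL 2).2 - NHL (n + eHL 2) = (n.2 - NHL n) := by simp [eHL, NHL]; omega
    have e3 : -NHL (n + eHL 2) = -NHL n + 1 := by simp [eHL, NHL]; omega
    simp only [Fin.reduceFinMk]
    rw [e1, e2, e3, zpow_add_one₀ a2]; ring

open Polynomial in
theorem HL_tele (p g0 g1 g2 : ℂ[X]) (hp : p ≠ 0) (γ0 γ1 γ2 d0 d1 d2 e : ℂ)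
    (h0 : d0 ≠ 0) (h1 : d1 ≠ 0) (h2 : d2 ≠ 0)
    (k0 : C γ0 * p = C d0 * (g2 - g1)) (k1 : C γ1 * p = C d1 * (g0 - g2))
    (k2 : C γ2 * p = C d2 * (g1 - g0)) :
    γ0 / (e * d0) + γ1 / (e * d1) + γ2 / (e * d2) = 0 := by
  have aux : ∀ γ d : ℂ, ∀ g : ℂ[X], d ≠ 0 → C γ * p = C d * g → C (γ / d) * p = g := by
    intro γ d g hd h
    rw [div_eq_inv_mul, C_mul, mul_assoc, h, ← mul_assoc, ← C_mul, inv_mul_cancel₀ hd, C_1, one_mul]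
  have s : C (γ0 / d0 + γ1 / d1 + γ2 / d2) * p = 0 := by
    rw [C_add, C_add, add_mul, add_mul, aux _ _ _ h0 k0, aux _ _ _ h1 k1, aux _ _ _ h2 k2]
    ring
  have s' : γ0 / d0 + γ1 / d1 + γ2 / d2 = 0 := by
    rcases mul_eq_zero.1 s with h | h
    · exact C_eq_zero.1 h
    · exact absurd h hp
  have : γ0 / (e * d0) + γ1 / (e * d1) + γ2 / (e * d2) = e⁻¹ * (γ0 / d0 + γ1 / d1 + γ2 / d2) := by
    simp only [div_eq_mul_inv, mul_inv]; ring
  rw [this, s', mul_zero]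

theorem stmt15 (μ : Measure ℂ) (w : ℂ → ℂ) (hw : Measurable w)
    (α : Fin 3 → ℂ) (hα : Function.Injective α)
    (ℓ : ℕ) (hℓ : 1 ≤ ℓ)
    (hae : ∀ᵐ h ∂μ, h ≠ 0 ∧ ∀ i : Fin 3, h ≠ α i)
    (hint : ∀ n : ℤ × ℤ, ∀ m : ℤ, |m| ≤ (ℓ : ℤ) + 1 →
      Integrable (fun h : ℂ =>
        w h * h ^ m * (h - α 0) ^ (n.1 - NHL n) * (h - α 1) ^ (n.2 - NHL n)
          * (h - α 2) ^ (-NHL n)) μ)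
    (ω : ℤ → ℤ × ℤ → ℂ)
    (hω : ∀ (m : ℤ) (n : ℤ × ℤ),
      ω m n = ∫ h : ℂ,
        w h * h ^ m * (h - α 0) ^ (n.1 - NHL n) * (h - α 1) ^ (n.2 - NHL n)
          * (h - α 2) ^ (-NHL n) ∂μ)
    (Dneg D0 D1 : ℤ × ℤ → ℂ)
    (hDneg : ∀ n, Dneg n
      = Matrix.det (Matrix.of fun a b : Fin (ℓ - 1) => ω (-1 - (a : ℤ) + (b : ℤ)) n))
    (hD0 : ∀ n, D0 n
      = Matrix.det (Matrix.of fun a b : Fin ℓ => ω (0 - (a : ℤ) + (b : ℤ)) n))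
    (hD1 : ∀ n, D1 n
      = Matrix.det (Matrix.of fun a b : Fin (ℓ + 1) => ω (1 - (a : ℤ) + (b : ℤ)) n))
    (hD0ne : ∀ n, D0 n ≠ 0) (hD1ne : ∀ n, D1 n ≠ 0)
    (u : ℤ × ℤ → ℂ)
    (hup : ∀ n : ℤ × ℤ, (n.1 + n.2) % 3 = 0 → u n = Dneg n / D0 n)
    (hun : ∀ n : ℤ × ℤ, (n.1 + n.2) % 3 = 1 → u n = - D0 n / D1 n) :
    HoneycombEqs ![α 1 - α 2, α 2 - α 0, α 0 - α 1] u := by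
  classical
  obtain ⟨k, rfl⟩ : ∃ k, ℓ = k + 1 := ⟨ℓ - 1, by omega⟩
  have rel := HL_rel μ w α (k + 1) hae hint ω hω
  have d0 : ∀ n, Matrix.det (Matrix.of fun a b : Fin (k + 1) =>
      (fun m => ω m n) (0 - (a : ℤ) + (b : ℤ))) ≠ 0 := fun n => by
    have := hD0ne n; rwa [hD0] at this
  have d1 : ∀ n, Matrix.det (Matrix.of fun a b : Fin (k + 1 + 1) =>
      (fun m => ω m n) (1 - (a : ℤ) + (b : ℤ))) ≠ 0 := fun n => by
    have := hD1ne n; rwa [hD1] at this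
  choose p hp hp1 hp2 hp3 using fun n => PHL_solve_delta (fun m => ω m n) 0 k (d0 n)
  choose q hq hq1 hq2 hq3 using fun n => PHL_solve_delta (fun m => ω m n) 1 (k + 1) (d1 n)
  choose G hG hG1 hG2 using fun n => PHL_monic (fun m => ω m n) (k + 1) (d0 n)
  have sg : ((-1 : ℂ) ^ k) * (-1) ^ k = 1 := by rw [← mul_pow]; simp
  have up : ∀ n : ℤ × ℤ, (n.1 + n.2) % 3 = 0 → u n = (-1) ^ k * (p n).coeff k := by
    intro n hn
    have e1 : Dneg n = Matrix.det (Matrix.of fun a b : Fin k =>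
      ω (0 - 1 - (a : ℤ) + (b : ℤ)) n) := by rw [hDneg]; rfl
    rw [hup n hn, hp3, hD0, e1, mul_div_assoc, ← mul_assoc, sg, one_mul]
  have un : ∀ n : ℤ × ℤ, (n.1 + n.2) % 3 = 1 → u n = (-1) ^ k * (q n).coeff (k + 1) := by
    intro n hn
    have e1 : D0 n = Matrix.det (Matrix.of fun a b : Fin (k + 1) =>
      ω (1 - 1 - (a : ℤ) + (b : ℤ)) n) := by rw [hD0]; rfl
    rw [hun n hn, hq3, hD1, e1, pow_succ, mul_div_assoc, ← mul_assoc, ← mul_assoc, sg]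
    ring
  have core : ∀ (n : ℤ × ℤ), (n.1 + n.2) % 3 = 1 → ∀ j l : Fin 3, ∀ n1 n2 n3 : ℤ × ℤ,
      n1 = n + eHL j → n2 = n + eHL l → n3 = n + eHL l + eHL j →
      (p n3).coeff k - (q n).coeff (k + 1) ≠ 0 ∧
      (Polynomial.X - Polynomial.C (α j)) * p n3 - q n = Polynomial.C ((p n3).coeff k - (q n).coeff (k + 1)) * G n2 := by
    rintro n hn j l _ _ _ rfl rfl rfl
    refine PHL_core k (α j) (α l) (fun m => ω m n) (fun m => ω m (n + eHL j))
      (fun m => ω m (n + eHL l)) (fun m => ω m (n + eHL l + eHL j)) ?_ ?_ ?_ (d0 _) (d0 _)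
      _ _ _ (hp _) (hp1 _) (hp2 _) (hq _) (hq1 _) (hq2 _) (hG _) (hG1 _) (hG2 _)
    · intro m h1 h2
      exact rel n (by omega) j m (by push_cast; omega) (by push_cast; omega)
    · intro m h1 h2
      exact rel n (by omega) l m (by push_cast; omega) (by push_cast; omega)
    · intro m h1 h2
      exact rel (n + eHL l) (by fin_cases l <;> simp [eHL] <;> omega) j m
        (by push_cast; omega) (by push_cast; omega)
  have sne : (-1 : ℂ) ^ k ≠ 0 := pow_ne_zero _ (by norm_num)
  have pne : ∀ n, p n ≠ 0 := fun n h => by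
    have := hp1 n; rw [h] at this; simp [PHL] at this
  have qne : ∀ n, q n ≠ 0 := fun n h => by
    have := hq1 n; rw [h] at this; simp [PHL] at this
  have mod : ∀ (n : ℤ × ℤ) (i : Fin 3), (n.1 + n.2) % 3 = 0 →
      ((n + eHL i).1 + (n + eHL i).2) % 3 = 1 := by
    intro n i hn; fin_cases i <;> simp [eHL] <;> omega
  have mod' : ∀ (n : ℤ × ℤ) (i : Fin 3), (n.1 + n.2) % 3 = 1 →
      ((n - eHL i).1 + (n - eHL i).2) % 3 = 0 := by
    intro n i hn; fin_cases i <;> simp [eHL] <;> omega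
  have esum : eHL 0 + eHL 1 + eHL 2 = 0 := by simp [eHL]
  have e2 : eHL 2 = - eHL 0 - eHL 1 := by rw [← sub_eq_zero, ← esum]; abel
  constructor
  · intro m hm
    have key : ∀ i j l : Fin 3, eHL i + eHL j + eHL l = 0 →
        (p m).coeff k - (q (m + eHL i)).coeff (k + 1) ≠ 0 ∧
        (Polynomial.X - Polynomial.C (α j)) * p m - q (m + eHL i) =
          Polynomial.C ((p m).coeff k - (q (m + eHL i)).coeff (k + 1)) * G (m - eHL j) := by
      intro i j l h
      refine core (m + eHL i) (mod m i hm) j l _ _ _ rfl ?_ ?_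
      · rw [← sub_eq_zero, ← neg_eq_zero, ← h]; abel
      · rw [← sub_eq_zero, ← neg_eq_zero, ← h]; abel
    obtain ⟨n0, k01⟩ := key 0 1 2 (by rw [← esum])
    obtain ⟨-, k02⟩ := key 0 2 1 (by rw [← esum]; abel)
    obtain ⟨n1, k10⟩ := key 1 0 2 (by rw [← esum]; abel)
    obtain ⟨-, k12⟩ := key 1 2 0 (by rw [← esum]; abel)
    obtain ⟨n2, k20⟩ := key 2 0 1 (by rw [← esum]; abel)
    obtain ⟨-, k21⟩ := key 2 1 0 (by rw [← esum]; abel)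
    have hu : ∀ i, u m - u (m + eHL i) =
        (-1) ^ k * ((p m).coeff k - (q (m + eHL i)).coeff (k + 1)) := by
      intro i; rw [up m hm, un _ (mod m i hm)]; ring
    constructor
    · intro i
      rw [hu i]
      refine mul_ne_zero sne ?_
      fin_cases i
      · exact n0
      · exact n1
      · exact n2
    · rw [Fin.sum_univ_three, hu, hu, hu]
      simp only [Matrix.cons_val]
      refine HL_tele (p m) (G (m - eHL 0)) (G (m - eHL 1)) (G (m - eHL 2)) (pne m) _ _ _ _ _ _ _
        n0 n1 n2 ?_ ?_ ?_
      · rw [Polynomial.C_sub (a := α 1)]; linear_combination k02 - k01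
      · rw [Polynomial.C_sub (a := α 2)]; linear_combination k10 - k12
      · rw [Polynomial.C_sub (a := α 0)]; linear_combination k21 - k20
  · intro m hm
    have key : ∀ i j l : Fin 3, eHL i + eHL j + eHL l = 0 →
        (p (m - eHL i)).coeff k - (q m).coeff (k + 1) ≠ 0 ∧
        (Polynomial.X - Polynomial.C (α j)) * p (m - eHL i) - q m =
          Polynomial.C ((p (m - eHL i)).coeff k - (q m).coeff (k + 1)) * G (m + eHL l) := by
      intro i j l h
      refine core m hm j l _ _ _ rfl rfl ?_
      rw [← sub_eq_zero, ← neg_eq_zero, ← h]; abel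
    obtain ⟨n0, k01⟩ := key 0 1 2 (by rw [← esum])
    obtain ⟨-, k02⟩ := key 0 2 1 (by rw [← esum]; abel)
    obtain ⟨n1, k10⟩ := key 1 0 2 (by rw [← esum]; abel)
    obtain ⟨-, k12⟩ := key 1 2 0 (by rw [← esum]; abel)
    obtain ⟨n2, k20⟩ := key 2 0 1 (by rw [← esum]; abel)
    obtain ⟨-, k21⟩ := key 2 1 0 (by rw [← esum]; abel)
    have hu : ∀ i, u m - u (m - eHL i) =
        -(-1) ^ k * ((p (m - eHL i)).coeff k - (q m).coeff (k + 1)) := by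
      intro i; rw [un m hm, up _ (mod' m i hm)]; ring
    constructor
    · intro i
      rw [hu i]
      refine mul_ne_zero (neg_ne_zero.2 sne) ?_
      fin_cases i
      · exact n0
      · exact n1
      · exact n2
    · rw [Fin.sum_univ_three, hu, hu, hu]
      simp only [Matrix.cons_val]
      refine HL_tele (q m) (-(Polynomial.X - Polynomial.C (α 0)) * G (m + eHL 0))
        (-(Polynomial.X - Polynomial.C (α 1)) * G (m + eHL 1))
        (-(Polynomial.X - Polynomial.C (α 2)) * G (m + eHL 2)) (qne m) _ _ _ _ _ _ _
        n0 n1 n2 ?_ ?_ ?_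
      · rw [Polynomial.C_sub (a := α 1)]
        linear_combination (Polynomial.X - Polynomial.C (α 1)) * k02 -
          (Polynomial.X - Polynomial.C (α 2)) * k01
      · rw [Polynomial.C_sub (a := α 2)]
        linear_combination (Polynomial.X - Polynomial.C (α 2)) * k10 -
          (Polynomial.X - Polynomial.C (α 0)) * k12
      · rw [Polynomial.C_sub (a := α 0)]
        linear_combination (Polynomial.X - Polynomial.C (α 0)) * k21 -
          (Polynomial.X - Polynomial.C (α 1)) * k20
end

section
/- Let s ≥ 1 be an integer; let L, R : {1,…,s} → ℂ with the L_j pairwise distinct, the R_k pairwise distinct, and L_j ≠ R_k for all j, k; let a₀, b₀ : {1,…,s} → ℂ with all values nonzero; let α₁, α₂, α₃ ∈ ℂ with R_k ≠ αᵢ and L_k ≠ αᵢ for all k, i. Define the s×s matrices A₀ = (a₀(k)/(L_j−R_k))_{j,k}, B₀ = (b₀(k)/(R_j−L_k))_{j,k} and M = (1/(L_j−R_k))_{j,k}. Then M, A₀ and B₀ are invertible; let c₊ = 𝟙ᵀM⁻¹ and c₋ = 𝟙ᵀ(Mᵀ)⁻¹, where 𝟙 is the all-ones column. For n = (n₁,n₂)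 ∈ ℤ² with N(n) = ⌊(n₁+n₂+2)/3⌋, set A(n) = A₀·diag((R_k−α₁)^{N(n)−n₁}·(R_k−α₂)^{N(n)−n₂}·(R_k−α₃)^{N(n)})_k and B(n) = B₀·diag((L_k−α₁)^{n₁−N(n)}·(L_k−α₂)^{n₂−N(n)}·(L_k−α₃)^{−N(n)})_k (integer powers). Assume that for every n ∈ ℤ² the matrices A(n)⁻¹ + B(n) and A(n) + B(n)⁻¹ are invertible and the scalar c₋·(A(n)+B(n)⁻¹)⁻¹·𝟙 is nonzero. Then the function u : ℤ² → ℂ given by u(n) = c₊·(A(n)⁻¹+B(n))⁻¹·𝟙 for n ∈ Λ⁺ and u(n) = [c₋·(A(n)+B(n)⁻¹)⁻¹·𝟙]⁻¹ for n ∈ Λ⁻ (arbitrary elsewhere) satisfies the honeycomb field equations with constants Γ₁ = α₂−α₃, Γ₂ = α₃−α₁, Γ₃ = α₁−α₂; in particular all the required differences are nonzero. -/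
open Matrix

def evHL {s : ℕ} (a : Fin s → ℂ) (M : Matrix (Fin s) (Fin s) ℂ) : ℂ := a ⬝ᵥ M *ᵥ 1

lemma evHL_add {s : ℕ} (a : Fin s → ℂ) (M N : Matrix (Fin s) (Fin s) ℂ) :
    evHL a (M + N) = evHL a M + evHL a N := by
  simp [evHL, add_mulVec]

lemma evHL_sub {s : ℕ} (a : Fin s → ℂ) (M N : Matrix (Fin s) (Fin s) ℂ) :
    evHL a (M - N) = evHL a M - evHL a N := by
  simp [evHL, sub_mulVec]

lemma evHL_smul {s : ℕ} (a : Fin s → ℂ) (c : ℂ) (M : Matrix (Fin s) (Fin s) ℂ) :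
    evHL a (c • M) = c * evHL a M := by
  simp [evHL, smul_mulVec]

lemma evHL_mul {s : ℕ} (a b : Fin s → ℂ) (M N : Matrix (Fin s) (Fin s) ℂ) :
    evHL a M * evHL b N = evHL a (M * vecMulVec 1 b * N) := by
  unfold evHL
  rw [← mulVec_mulVec, ← mulVec_mulVec, vecMulVec_mulVec]
  simp [mulVec_smul, mul_comm]

lemma evHL_diag {s : ℕ} (a d : Fin s → ℂ) (M : Matrix (Fin s) (Fin s) ℂ) :
    evHL (fun k => a k * d k) M = evHL a (diagonal d * M) := by
  unfold evHL
  rw [← mulVec_mulVec]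
  simp [dotProduct, mulVec_diagonal, mul_assoc]

/-- rank one perturbation -/
lemma rank1HL {s : ℕ} (a : Fin s → ℂ) (x P P2 Pi P2i W : Matrix (Fin s) (Fin s) ℂ)
    (h : P2 = P - W * vecMulVec 1 a * x) (h1 : Pi * P = 1) (h2 : P2 * P2i = 1) :
    (1 - evHL a (x * Pi * W)) * (1 + evHL a (x * P2i * W)) = 1 := by
  have e : evHL a (x * Pi * W) * evHL a (x * P2i * W)
      = evHL a (x * P2i * W) - evHL a (x * Pi * W) := by
    rw [evHL_mul, ← evHL_sub]
    congr 1
    have : W * vecMulVec 1 a * x = P - P2 := by rw [h]; abel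
    calc x * Pi * W * vecMulVec 1 a * (x * P2i * W)
        = x * Pi * (W * vecMulVec 1 a * x) * P2i * W := by noncomm_ring
      _ = x * (Pi * P) * P2i * W - x * Pi * (P2 * P2i) * W := by rw [this]; noncomm_ring
      _ = _ := by rw [h1, h2]; noncomm_ring
  linear_combination -e

lemma coreI {s : ℕ} (a b : Fin s → ℂ)
    (A B x y X Y Xi Yi Pi P12i Q12i : Matrix (Fin s) (Fin s) ℂ)
    (hA2 : Y * A - A * y = vecMulVec 1 a)
    (hB1 : x * B - B * X = vecMulVec 1 b)
    (cx : x * y = y * x)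
    (cX : X * Xi = 1) (cY' : Yi * Y = 1)
    (hP : Pi * (1 + B * A) = 1)
    (hP12 : (1 + B * Xi * Yi * (A * x * y)) * P12i = 1)
    (hQ12 : A * x * y * P12i * (B * Xi * Yi) = 1 - Q12i) :
    (1 - evHL a (Pi * (B * Yi))) * (1 + evHL a (x * P12i * (B * Xi * Yi)))
      = 1 + evHL a Pi * evHL b (Xi * Yi * Q12i) := by
  have k3 : x * (B * Xi * Yi) = B * Yi + vecMulVec 1 b * Xi * Yi := by
    rw [← hB1]
    calc x * (B * Xi * Yi) = B * (X * Xi) * Yi + (x * B - B * X) * Xi * Yi := by noncomm_ring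
      _ = _ := by rw [cX]; noncomm_ring
  have k1 : B * Yi * vecMulVec 1 a * x = (1 + B * A) * x
      - x * (1 + B * Xi * Yi * (A * x * y)) + vecMulVec 1 b * Xi * Yi * (A * x * y) := by
    have : x * (1 + B * Xi * Yi * (A * x * y)) =
      x + (x * (B * Xi * Yi)) * (A * x * y) := by noncomm_ring
    rw [this, k3, ← hA2]
    have e2 : B * Yi * (Y * A - A * y) * x = B * (Yi * Y) * A * x - B * Yi * A * (y * x) := by
      noncomm_ring
    rw [e2, cY', ← cx]
    noncomm_ring
  have e : evHL a (Pi * (B * Yi)) * evHL a (x * P12i * (B * Xi * Yi))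
      = evHL a (x * P12i * (B * Xi * Yi)) - evHL a (Pi * (B * Yi))
        - evHL a Pi * evHL b (Xi * Yi * Q12i) := by
    rw [evHL_mul, evHL_mul, ← evHL_sub, ← evHL_sub]
    congr 1
    calc Pi * (B * Yi) * vecMulVec 1 a * (x * P12i * (B * Xi * Yi))
        = Pi * (B * Yi * vecMulVec 1 a * x) * (P12i * (B * Xi * Yi)) := by noncomm_ring
      _ = (Pi * (1 + B * A)) * x * (P12i * (B * Xi * Yi))
          - Pi * x * ((1 + B * Xi * Yi * (A * x * y)) * P12i) * (B * Xi * Yi)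
          + Pi * (vecMulVec 1 b * Xi * Yi) * (A * x * y * P12i * (B * Xi * Yi)) := by
            rw [k1]; noncomm_ring
      _ = x * P12i * (B * Xi * Yi) - Pi * (x * (B * Xi * Yi))
          + Pi * (vecMulVec 1 b * Xi * Yi) * (1 - Q12i) := by
            rw [hP, hP12, hQ12]; noncomm_ring
      _ = _ := by rw [k3]; noncomm_ring
  linear_combination -e

/-- the first half of the second identity -/
lemma coreIIa {s : ℕ} (a b : Fin s → ℂ)
    (A B x X Xi Pi Q1i : Matrix (Fin s) (Fin s) ℂ)
    (hA1 : X * A - A * x = vecMulVec 1 a)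
    (cX' : Xi * X = 1)
    (hP : (1 + B * A) * Pi = 1)
    (hQ1 : Q1i * (1 + A * x * (B * Xi)) = 1) :
    evHL b (Xi * Q1i) * evHL a Pi = evHL b (A * Pi) - evHL b (Xi * Q1i * (A * x)) := by
  rw [evHL_mul, ← evHL_sub]
  congr 1
  have k : vecMulVec 1 a = (1 + A * x * (B * Xi)) * X * A - A * x * (1 + B * A) := by
    have : (1 + A * x * (B * Xi)) * X * A = X * A + A * x * B * (Xi * X) * A := by noncomm_ring
    rw [this, cX', ← hA1]; noncomm_ring
  calc Xi * Q1i * vecMulVec 1 a * Pi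
      = Xi * (Q1i * (1 + A * x * (B * Xi))) * X * A * Pi
        - Xi * Q1i * (A * x) * ((1 + B * A) * Pi) := by rw [k]; noncomm_ring
    _ = (Xi * X) * A * Pi - Xi * Q1i * (A * x) := by rw [hQ1, hP]; noncomm_ring
    _ = _ := by rw [cX']; noncomm_ring

lemma coreIIb {s : ℕ} (b : Fin s → ℂ)
    (A B x y Y Xi Yi Q1i Q12i : Matrix (Fin s) (Fin s) ℂ)
    (hB2 : y * B - B * Y = vecMulVec 1 b)
    (cY : Y * Yi = 1) (cXiYi : Xi * Yi = Yi * Xi)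
    (hQ1 : Q1i * (1 + A * x * (B * Xi)) = 1)
    (hQ12 : (1 + A * x * y * (B * Xi * Yi)) * Q12i = 1) :
    evHL b (Xi * Q1i * (A * x)) * evHL b (Xi * Yi * Q12i)
      = evHL b (Xi * Q1i) - evHL b (Xi * Q12i) := by
  rw [evHL_mul, ← evHL_sub]
  congr 1
  have k : A * x * vecMulVec 1 b * (Xi * Yi) =
      (1 + A * x * y * (B * Xi * Yi)) - (1 + A * x * (B * Xi)) := by
    rw [← hB2, cXiYi]
    have : A * x * (y * B - B * Y) * (Yi * Xi) =
      A * x * y * B * (Yi * Xi) - A * x * B * (Y * Yi) * Xi := by noncomm_ring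
    rw [this, cY, ← cXiYi]; noncomm_ring
  calc Xi * Q1i * (A * x) * vecMulVec 1 b * (Xi * Yi * Q12i)
      = Xi * Q1i * (A * x * vecMulVec 1 b * (Xi * Yi)) * Q12i := by noncomm_ring
    _ = Xi * Q1i * ((1 + A * x * y * (B * Xi * Yi)) * Q12i)
        - Xi * (Q1i * (1 + A * x * (B * Xi))) * Q12i := by rw [k]; noncomm_ring
    _ = _ := by rw [hQ12, hQ1]; noncomm_ring

noncomputable def cauHL {s : ℕ} (L R a : Fin s → ℂ) : Matrix (Fin s) (Fin s) ℂ :=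
  Matrix.of fun j k => a k / (L j - R k)

noncomputable def qHL {s : ℕ} (L R a b : Fin s → ℂ) : ℂ :=
  evHL a (1 + cauHL R L b * cauHL L R a)⁻¹

def tauHL {s : ℕ} (L R a b : Fin s → ℂ) : Prop :=
  IsUnit (1 + cauHL R L b * cauHL L R a).det

lemma tauHL_swap {s : ℕ} {L R a b : Fin s → ℂ} (h : tauHL L R a b) : tauHL R L b a := by
  unfold tauHL at *
  rwa [det_one_add_mul_comm]

lemma cauHL_diag {s : ℕ} (L R a d : Fin s → ℂ) :
    cauHL L R (fun k => a k * d k) = cauHL L R a * diagonal d := by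
  ext j k
  simp [cauHL, mul_diagonal]; ring

lemma cauHL_sylv {s : ℕ} (L R a : Fin s → ℂ) (hLR : ∀ j k, L j ≠ R k) (p : ℂ) :
    diagonal (fun k => L k - p) * cauHL L R a - cauHL L R a * diagonal (fun k => R k - p)
      = vecMulVec 1 a := by
  ext j k
  have : L j - R k ≠ 0 := sub_ne_zero.2 (hLR j k)
  simp [cauHL, mul_diagonal, diagonal_mul, vecMulVec_apply]
  field_simp
  ring

set_option maxHeartbeats 1600000 in
lemma coreHL {s : ℕ} (L R a b : Fin s → ℂ) (hLR : ∀ j k, L j ≠ R k) (p q : ℂ)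
    (hp : ∀ k, L k ≠ p) (hq : ∀ k, L k ≠ q) (a1 a2 a12 b1 b2 b12 : Fin s → ℂ)
    (ha1 : ∀ k, a1 k = a k * (R k - p)) (ha2 : ∀ k, a2 k = a k * (R k - q))
    (ha12 : ∀ k, a12 k = a k * (R k - p) * (R k - q))
    (hb1 : ∀ k, b1 k = b k * (L k - p)⁻¹) (hb2 : ∀ k, b2 k = b k * (L k - q)⁻¹)
    (hb12 : ∀ k, b12 k = b k * (L k - p)⁻¹ * (L k - q)⁻¹)
    (t : tauHL L R a b) (t1 : tauHL L R a1 b1) (t2 : tauHL L R a2 b2)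
    (t12 : tauHL L R a12 b12) :
    1 + qHL L R a b * qHL R L b12 a12 ≠ 0 ∧
    (p - q) * qHL R L b12 a12 =
      (qHL R L b1 a1 - qHL R L b2 a2) * (1 + qHL L R a b * qHL R L b12 a12) := by
  have hp' : ∀ k, L k - p ≠ 0 := fun k => sub_ne_zero.2 (hp k)
  have hq' : ∀ k, L k - q ≠ 0 := fun k => sub_ne_zero.2 (hq k)
  have hRL : ∀ j k, R j ≠ L k := fun j k => (hLR k j).symm
  obtain rfl : a1 = _ := funext ha1
  obtain rfl : a2 = _ := funext ha2
  obtain rfl : a12 = _ := funext ha12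
  obtain rfl : b1 = _ := funext hb1
  obtain rfl : b2 = _ := funext hb2
  obtain rfl : b12 = _ := funext hb12
  clear ha1 ha2 ha12 hb1 hb2 hb12
  have s1 := tauHL_swap t1
  have s2 := tauHL_swap t2
  have s12 := tauHL_swap t12
  have hA1 := cauHL_sylv L R a hLR p
  have hA2 := cauHL_sylv L R a hLR q
  have hB1 := cauHL_sylv R L b hRL p
  have hB2 := cauHL_sylv R L b hRL q
  unfold tauHL at *
  unfold qHL
  simp only [cauHL_diag, evHL_diag] at *
  generalize cauHL L R a = A at *
  generalize cauHL R L b = B at *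
  have cX : diagonal (fun k => L k - p) * diagonal (fun k => (L k - p)⁻¹) = 1 := by
    simp [hp']
  have cX' : diagonal (fun k => (L k - p)⁻¹) * diagonal (fun k => L k - p) = 1 := by
    simp [hp']
  have cY : diagonal (fun k => L k - q) * diagonal (fun k => (L k - q)⁻¹) = 1 := by
    simp [hq']
  have cY' : diagonal (fun k => (L k - q)⁻¹) * diagonal (fun k => L k - q) = 1 := by
    simp [hq']
  have cXiYi : diagonal (fun k => (L k - p)⁻¹) * diagonal (fun k => (L k - q)⁻¹)
      = diagonal (fun k => (L k - q)⁻¹) * diagonal (fun k => (L k - p)⁻¹) := by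
    simp [mul_comm]
  have cx : diagonal (fun k => R k - p) * diagonal (fun k => R k - q)
      = diagonal (fun k => R k - q) * diagonal (fun k => R k - p) := by
    simp [mul_comm]
  have hXY : diagonal (fun k => (L k - p)⁻¹) - diagonal (fun k => (L k - q)⁻¹)
      = (p - q) • (diagonal (fun k => (L k - p)⁻¹) * diagonal (fun k => (L k - q)⁻¹)) := by
    rw [diagonal_sub, diagonal_mul_diagonal, ← diagonal_smul]
    congr 1; funext k
    have := hp' k
    have := hq' k
    simp
    field_simp
    ring
  generalize diagonal (fun k => L k - p) = X at *
  generalize diagonal (fun k => L k - q) = Y at *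
  generalize diagonal (fun k => R k - p) = x at *
  generalize diagonal (fun k => R k - q) = y at *
  generalize diagonal (fun k => (L k - p)⁻¹) = Xi at *
  generalize diagonal (fun k => (L k - q)⁻¹) = Yi at *
  have eA : A * x * y = A * y * x := by rw [mul_assoc, cx, mul_assoc]
  have eB : B * Xi * Yi = B * Yi * Xi := by rw [mul_assoc, cXiYi, mul_assoc]
  have I := coreI a b A B x y X Y Xi Yi _ _ (1 + A * x * y * (B * Xi * Yi))⁻¹ hA2 hB1 cx cX cY'
    (nonsing_inv_mul _ t) (mul_nonsing_inv _ t12) (by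
      have h1 := mul_nonsing_inv _ t12
      have h2 := nonsing_inv_mul _ s12
      set P := (1 + B * Xi * Yi * (A * x * y))⁻¹
      set Q := (1 + A * x * y * (B * Xi * Yi))⁻¹
      generalize B * Xi * Yi = B' at *
      generalize A * x * y = A' at *
      have h3 : Q * A' = A' * P := by
        calc Q * A' = Q * A' * ((1 + B' * A') * P) := by rw [h1, mul_one]
          _ = Q * (1 + A' * B') * A' * P := by noncomm_ring
          _ = _ := by rw [h2, one_mul]
      rw [← h3]
      calc Q * A' * B' = Q * (1 + A' * B') - Q := by noncomm_ring
        _ = _ := by rw [h2])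
  have eE : ∀ C : Matrix (Fin s) (Fin s) ℂ, C * Yi * (Y * A - A * y) = C * A - C * Yi * (A * y) := by
    intro C
    calc C * Yi * (Y * A - A * y) = C * (Yi * Y) * A - C * Yi * (A * y) := by noncomm_ring
      _ = _ := by rw [cY', mul_one]
  have F := rank1HL a 1 (1 + B * A) (1 + B * Yi * (A * y)) _ _ (B * Yi)
    (by rw [← hA2, eE B]; noncomm_ring) (nonsing_inv_mul _ t) (mul_nonsing_inv _ t2)
  have G := rank1HL a x (1 + B * Xi * (A * x)) (1 + B * Xi * Yi * (A * x * y)) _ _ (B * Xi * Yi)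
    (by rw [← hA2, eE (B * Xi), eA]; noncomm_ring) (nonsing_inv_mul _ t1) (mul_nonsing_inv _ t12)
  simp only [one_mul] at F
  have hb1 := coreIIa a b A B x X Xi _ _ hA1 cX' (mul_nonsing_inv _ t) (nonsing_inv_mul _ s1)
  have hb2 := coreIIa a b A B y Y Yi _ _ hA2 cY' (mul_nonsing_inv _ t) (nonsing_inv_mul _ s2)
  have hc1 := coreIIb b A B x y Y Xi Yi _ _ hB2 cY cXiYi (nonsing_inv_mul _ s1)
    (mul_nonsing_inv _ s12)
  have hc2 := coreIIb b A B y x X Yi Xi _ (1 + A * x * y * (B * Xi * Yi))⁻¹ hB1 cX cXiYi.symm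
    (nonsing_inv_mul _ s2)
    (by rw [← eA, ← eB]; exact mul_nonsing_inv _ s12)
  rw [← cXiYi] at hc2
  have hd : evHL b (Xi * (1 + A * x * y * (B * Xi * Yi))⁻¹)
      - evHL b (Yi * (1 + A * x * y * (B * Xi * Yi))⁻¹)
      = (p - q) * evHL b (Xi * Yi * (1 + A * x * y * (B * Xi * Yi))⁻¹) := by
    rw [← evHL_sub, ← sub_mul, hXY, smul_mul_assoc, evHL_smul]
  simp only [← mul_assoc] at *
  refine ⟨?_, ?_⟩
  · rw [← I]
    exact mul_ne_zero (left_ne_zero_of_mul_eq_one F) (right_ne_zero_of_mul_eq_one G)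
  · generalize evHL b (Xi * Yi * (1 + A * x * y * B * Xi * Yi)⁻¹) = r12 at *
    linear_combination -hd - r12 * hb1 + r12 * hb2 + hc1 - hc2

lemma cauHL_det {s : ℕ} (L R a : Fin s → ℂ) (hLR : ∀ j k, L j ≠ R k)
    (hL : Function.Injective L) (hR : Function.Injective R) (ha : ∀ k, a k ≠ 0) :
    IsUnit (cauHL L R a).det := by
  rw [isUnit_iff_ne_zero]
  intro h0
  obtain ⟨v, hv, hv0⟩ := Matrix.exists_mulVec_eq_zero_iff.2 h0
  apply hv
  let P : Polynomial ℂ := ∑ k, Polynomial.C (a k * v k) *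
    ∏ l ∈ Finset.univ.erase k, (Polynomial.X - Polynomial.C (R l))
  have hs : ∀ k : Fin s, (Finset.univ.erase k).card < s := fun k => by
    rw [Finset.card_erase_of_mem (Finset.mem_univ k)]
    have := k.pos
    simp; omega
  have hdeg : P.degree < (Finset.univ : Finset (Fin s)).card := by
    refine (Polynomial.degree_sum_le _ _).trans_lt ?_
    rw [Finset.sup_lt_iff (WithBot.bot_lt_coe _)]
    intro k _
    rw [← Polynomial.smul_eq_C_mul]
    refine (Polynomial.degree_smul_le _ _).trans_lt ?_
    rw [Polynomial.degree_prod]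
    simp only [Polynomial.degree_X_sub_C, Finset.sum_const, nsmul_eq_mul, mul_one]
    have := hs k
    simp only [Finset.card_univ, Fintype.card_fin]
    exact_mod_cast this
  have hev : ∀ z, P.eval z = ∑ k, a k * v k * ∏ l ∈ Finset.univ.erase k, (z - R l) := by
    intro z
    simp [P, Polynomial.eval_finsetSum, Polynomial.eval_prod]
  have hP : P = 0 := by
    refine Polynomial.eq_zero_of_degree_lt_of_eval_index_eq_zero (v := L) Finset.univ
      hL.injOn hdeg ?_
    intro j _
    rw [hev]
    have h1 := congrFun hv0 j
    simp only [mulVec, dotProduct, cauHL, of_apply, Pi.zero_apply] at h1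
    have : ∑ k, a k * v k * ∏ l ∈ Finset.univ.erase k, (L j - R l) =
        (∏ l, (L j - R l)) * ∑ k, a k / (L j - R k) * v k := by
      rw [Finset.mul_sum]
      refine Finset.sum_congr rfl fun k _ => ?_
      rw [← Finset.mul_prod_erase Finset.univ _ (Finset.mem_univ k)]
      have : L j - R k ≠ 0 := sub_ne_zero.2 (hLR j k)
      field_simp
    rw [this, h1, mul_zero]
  funext k
  have h2 := hev (R k)
  rw [hP, Polynomial.eval_zero, Finset.sum_eq_single k] at h2
  · have h3 : ∏ l ∈ Finset.univ.erase k, (R k - R l) ≠ 0 := by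
      rw [Finset.prod_ne_zero_iff]
      intro l hl
      exact sub_ne_zero.2 fun e => (Finset.ne_of_mem_erase hl) (hR e).symm
    have := (mul_eq_zero.1 h2.symm).resolve_right h3
    simpa using (mul_eq_zero.1 this).resolve_left (ha k)
  · intro l _ hl
    apply mul_eq_zero_of_right
    exact Finset.prod_eq_zero (Finset.mem_erase.2 ⟨hl.symm, Finset.mem_univ k⟩) (sub_self _)
  · simp

lemma sumHL {s : ℕ} (M A B : Matrix (Fin s) (Fin s) ℂ) (c : Fin s → ℂ)
    (hM : IsUnit M.det) (hA : A = M * diagonal c) (hAu : IsUnit A.det) :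
    ∑ j, ∑ k, (M⁻¹ * (A⁻¹ + B)⁻¹) j k = evHL c (1 + B * A)⁻¹ := by
  have h1 : A⁻¹ + B = (1 + B * A) * A⁻¹ := by
    rw [add_mul, one_mul, mul_assoc, mul_nonsing_inv _ hAu, mul_one]
  rw [h1, Matrix.mul_inv_rev, nonsing_inv_nonsing_inv _ hAu]
  conv_lhs => rw [hA]
  rw [← mul_assoc, ← mul_assoc, nonsing_inv_mul _ hM, one_mul, ← hA]
  simp [evHL, dotProduct, mulVec, diagonal_mul, Finset.mul_sum]

lemma finPlus (α r rr : Fin 3 → ℂ) (q : ℂ) 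
    (h0 : ∀ i, rr i ≠ 0) (hI : ∀ i, 1 + q * rr i ≠ 0)
    (hII : ∀ i, (α (i+1) - α (i+2)) * rr i = (r (i+1) - r (i+2)) * (1 + q * rr i)) :
    (∀ i, q - (-rr i)⁻¹ ≠ 0) ∧
    ∑ i : Fin 3, ![α 1 - α 2, α 2 - α 0, α 0 - α 1] i / (q - (-rr i)⁻¹) = 0 := by
  have e : ∀ i, q - (-rr i)⁻¹ = (1 + q * rr i) / rr i := by
    intro i
    have := h0 i
    field_simp
    ring
  have f : ∀ i, (α (i+1) - α (i+2)) / (q - (-rr i)⁻¹) = r (i+1) - r (i+2) := by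
    intro i
    rw [e, div_div_eq_mul_div, div_eq_iff (hI i), hII]
  refine ⟨fun i => by rw [e]; exact div_ne_zero (hI i) (h0 i), ?_⟩
  have f0 := f 0
  have f1 := f 1
  have f2 := f 2
  rw [Fin.sum_univ_three]
  simp at f0 f1 f2 ⊢
  linear_combination f0 + f1 + f2

lemma finMinus (α r rr : Fin 3 → ℂ) (q : ℂ) 
    (h0 : q ≠ 0) (hI : ∀ i, 1 + q * rr i ≠ 0)
    (hII : ∀ i, (α (i+1) - α (i+2)) * rr i = (r (i+1) - r (i+2)) * (1 + q * rr i)) :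
    (∀ i, (-q)⁻¹ - rr i ≠ 0) ∧
    ∑ i : Fin 3, ![α 1 - α 2, α 2 - α 0, α 0 - α 1] i / ((-q)⁻¹ - rr i) = 0 := by
  have e : ∀ i, (-q)⁻¹ - rr i = -(1 + q * rr i) / q := by
    intro i
    field_simp
    ring
  have f : ∀ i, (α (i+1) - α (i+2)) / ((-q)⁻¹ - rr i)
      = -q * (α (i+1) - α (i+2)) + q ^ 2 * (r (i+1) - r (i+2)) := by
    intro i
    rw [e, div_div_eq_mul_div, div_eq_iff (neg_ne_zero.2 (hI i))]
    linear_combination -q ^ 2 * hII i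
  refine ⟨fun i => by rw [e]; exact div_ne_zero (neg_ne_zero.2 (hI i)) h0, ?_⟩
  have f0 := f 0
  have f1 := f 1
  have f2 := f 2
  rw [Fin.sum_univ_three]
  simp at f0 f1 f2 ⊢
  linear_combination f0 + f1 + f2

noncomputable def wHL (x : Fin 3 → ℂ) (n : ℤ × ℤ) : ℂ :=
  x 0 ^ (NHL n - n.1) * x 1 ^ (NHL n - n.2) * x 2 ^ (NHL n)

lemma wHL_sub (x : Fin 3 → ℂ) (hx : ∀ i, x i ≠ 0) (n : ℤ × ℤ) (hn : (n.1 + n.2) % 3 = 0)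
    (i : Fin 3) : wHL x (n - eHL i) = wHL x n * x i := by
  obtain ⟨n1, n2⟩ := n
  simp only at hn
  fin_cases i
  · have e1 : NHL ((n1, n2) - eHL 0) = NHL (n1, n2) := by simp [NHL, eHL]; omega
    simp only [Fin.zero_eta, wHL, e1]
    generalize NHL (n1, n2) = N
    have h1 : N - ((n1, n2) - eHL 0).1 = (N - n1) + 1 := by simp [eHL]; ring
    have h2 : N - ((n1, n2) - eHL 0).2 = N - n2 := by simp [eHL]
    rw [h1, h2, zpow_add_one₀ (hx 0)]; ring
  · have e1 : NHL ((n1, n2) - eHL 1) = NHL (n1, n2) := by simp [NHL, eHL]; omega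
    simp only [Fin.mk_one, wHL, e1]
    generalize NHL (n1, n2) = N
    have h1 : N - ((n1, n2) - eHL 1).1 = (N - n1) := by simp [eHL]
    have h2 : N - ((n1, n2) - eHL 1).2 = N - n2 + 1 := by simp [eHL]; ring
    rw [h1, h2, zpow_add_one₀ (hx 1)]; ring
  · have e1 : NHL ((n1, n2) - eHL 2) = NHL (n1, n2) + 1 := by simp [NHL, eHL]; omega
    simp only [Fin.reduceFinMk, wHL, e1]
    generalize NHL (n1, n2) = N
    have h1 : N + 1 - ((n1, n2) - eHL 2).1 = (N - n1) := by simp [eHL]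
    have h2 : N + 1 - ((n1, n2) - eHL 2).2 = N - n2 := by simp [eHL]
    rw [h1, h2, zpow_add_one₀ (hx 2)]; ring

lemma wHL_add (x : Fin 3 → ℂ) (hx : ∀ i, x i ≠ 0) (n : ℤ × ℤ) (hn : (n.1 + n.2) % 3 = 0)
    (i : Fin 3) : wHL x (n + eHL i) = wHL x n * x (i + 1) * x (i + 2) := by
  obtain ⟨n1, n2⟩ := n
  simp only at hn
  fin_cases i
  · have e1 : NHL ((n1, n2) + eHL 0) = NHL (n1, n2) + 1 := by simp [NHL, eHL]; omega
    simp only [Fin.zero_eta, wHL, e1]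
    generalize NHL (n1, n2) = N
    have h1 : N + 1 - ((n1, n2) + eHL 0).1 = (N - n1) := by simp [eHL]
    have h2 : N + 1 - ((n1, n2) + eHL 0).2 = N - n2 + 1 := by simp [eHL]; ring
    rw [h1, h2, zpow_add_one₀ (hx 1), zpow_add_one₀ (hx 2)]
    simp; ring
  · have e1 : NHL ((n1, n2) + eHL 1) = NHL (n1, n2) + 1 := by simp [NHL, eHL]; omega
    simp only [Fin.mk_one, wHL, e1]
    generalize NHL (n1, n2) = N
    have h1 : N + 1 - ((n1, n2) + eHL 1).1 = (N - n1) + 1 := by simp [eHL]; ring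
    have h2 : N + 1 - ((n1, n2) + eHL 1).2 = N - n2 := by simp [eHL]
    have h3 : (1 : Fin 3) + 1 = 2 := rfl
    have h4 : (1 : Fin 3) + 2 = 0 := rfl
    rw [h1, h2, zpow_add_one₀ (hx 0), zpow_add_one₀ (hx 2), h3, h4]
    ring
  · have e1 : NHL ((n1, n2) + eHL 2) = NHL (n1, n2) := by simp [NHL, eHL]; omega
    simp only [Fin.reduceFinMk, wHL, e1]
    generalize NHL (n1, n2) = N
    have h1 : N - ((n1, n2) + eHL 2).1 = (N - n1) + 1 := by simp [eHL]; ring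
    have h2 : N - ((n1, n2) + eHL 2).2 = N - n2 + 1 := by simp [eHL]; ring
    have h3 : (2 : Fin 3) + 1 = 0 := rfl
    have h4 : (2 : Fin 3) + 2 = 1 := rfl
    rw [h1, h2, zpow_add_one₀ (hx 0), zpow_add_one₀ (hx 1), h3, h4]
    ring

lemma eHL_sum (i : Fin 3) : ((eHL i).1 + (eHL i).2) % 3 = 1 := by
  fin_cases i <;> simp [eHL]

lemma eHL_rel (i : Fin 3) : eHL i + eHL (i + 1) + eHL (i + 2) = 0 := by
  fin_cases i <;> rfl

lemma wHL_sub' (x : Fin 3 → ℂ) (hx : ∀ i, x i ≠ 0) (n : ℤ × ℤ) (hn : (n.1 + n.2) % 3 = 1)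
    (i : Fin 3) : wHL x (n - eHL i) = wHL x n * (x (i + 1))⁻¹ * (x (i + 2))⁻¹ := by
  have h := wHL_add x hx (n - eHL i) (by
    have := eHL_sum i
    simp only [Prod.fst_sub, Prod.snd_sub]; omega) i
  rw [sub_add_cancel] at h
  have := hx (i + 1)
  have := hx (i + 2)
  rw [h]; field_simp

lemma wHL_add' (x : Fin 3 → ℂ) (hx : ∀ i, x i ≠ 0) (n : ℤ × ℤ) (hn : (n.1 + n.2) % 3 = 1)
    (i : Fin 3) : wHL x (n + eHL i) = wHL x n * (x i)⁻¹ := by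
  have hm : ((n - eHL (i + 1)).1 + (n - eHL (i + 1)).2) % 3 = 0 := by
    have := eHL_sum (i + 1)
    simp only [Prod.fst_sub, Prod.snd_sub]; omega
  have h := wHL_sub x hx (n - eHL (i + 1)) hm (i + 2)
  have h' := wHL_sub' x hx n hn (i + 1)
  have e : n - eHL (i + 1) - eHL (i + 2) = n + eHL i := by
    have := eHL_rel i
    linear_combination (-1 : ℤ) • this
  have e1 : i + 1 + 1 = i + 2 := by fin_cases i <;> rfl
  have e2 : i + 1 + 2 = i := by fin_cases i <;> rfl
  rw [e1, e2] at h'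
  rw [e, h'] at h
  have := hx (i + 2)
  rw [h]; field_simp

theorem stmt16 (s : ℕ) (hs : 1 ≤ s) (L R : Fin s → ℂ)
    (hL : Function.Injective L) (hR : Function.Injective R)
    (hLR : ∀ j k, L j ≠ R k)
    (a0 b0 : Fin s → ℂ) (ha0 : ∀ k, a0 k ≠ 0) (hb0 : ∀ k, b0 k ≠ 0)
    (α : Fin 3 → ℂ) (hRα : ∀ (k : Fin s) (i : Fin 3), R k ≠ α i)
    (hLα : ∀ (k : Fin s) (i : Fin 3), L k ≠ α i)
    (A0 B0 M : Matrix (Fin s) (Fin s) ℂ)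
    (hA0 : ∀ j k, A0 j k = a0 k / (L j - R k))
    (hB0 : ∀ j k, B0 j k = b0 k / (R j - L k))
    (hM : ∀ j k, M j k = 1 / (L j - R k))
    (A B : ℤ × ℤ → Matrix (Fin s) (Fin s) ℂ)
    (hA : ∀ n : ℤ × ℤ, A n = A0 * Matrix.diagonal (fun k =>
      (R k - α 0) ^ (NHL n - n.1) * (R k - α 1) ^ (NHL n - n.2)
        * (R k - α 2) ^ (NHL n)))
    (hB : ∀ n : ℤ × ℤ, B n = B0 * Matrix.diagonal (fun k =>
      (L k - α 0) ^ (n.1 - NHL n) * (L k - α 1) ^ (n.2 - NHL n)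
        * (L k - α 2) ^ (-NHL n)))
    (hinv1 : ∀ n : ℤ × ℤ, IsUnit ((A n)⁻¹ + B n).det)
    (hinv2 : ∀ n : ℤ × ℤ, IsUnit (A n + (B n)⁻¹).det)
    (hscal : ∀ n : ℤ × ℤ,
      ∑ j : Fin s, ∑ k : Fin s, ((Mᵀ)⁻¹ * (A n + (B n)⁻¹)⁻¹) j k ≠ 0)
    (u : ℤ × ℤ → ℂ)
    (hup : ∀ n : ℤ × ℤ, (n.1 + n.2) % 3 = 0 →
      u n = ∑ j : Fin s, ∑ k : Fin s, (M⁻¹ * ((A n)⁻¹ + B n)⁻¹) j k)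
    (hun : ∀ n : ℤ × ℤ, (n.1 + n.2) % 3 = 1 →
      u n = (∑ j : Fin s, ∑ k : Fin s, ((Mᵀ)⁻¹ * (A n + (B n)⁻¹)⁻¹) j k)⁻¹) :
    (IsUnit M.det ∧ IsUnit A0.det ∧ IsUnit B0.det) ∧
    HoneycombEqs ![α 1 - α 2, α 2 - α 0, α 0 - α 1] u := by
  have hRL : ∀ j k, R j ≠ L k := fun j k => (hLR k j).symm
  have hx : ∀ k i, (fun i => R k - α i) i ≠ 0 := fun k i => sub_ne_zero.2 (hRα k i)
  have hX : ∀ k i, (fun i => L k - α i) i ≠ 0 := fun k i => sub_ne_zero.2 (hLα k i)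
  obtain ⟨a, ha⟩ : ∃ a : ℤ × ℤ → Fin s → ℂ,
      a = fun n k => a0 k * wHL (fun i => R k - α i) n := ⟨_, rfl⟩
  obtain ⟨b, hb⟩ : ∃ b : ℤ × ℤ → Fin s → ℂ,
      b = fun n k => b0 k * (wHL (fun i => L k - α i) n)⁻¹ := ⟨_, rfl⟩
  have wne : ∀ (x : Fin 3 → ℂ) n, (∀ i, x i ≠ 0) → wHL x n ≠ 0 := by
    intro x n h
    exact mul_ne_zero (mul_ne_zero (zpow_ne_zero _ (h 0)) (zpow_ne_zero _ (h 1)))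
      (zpow_ne_zero _ (h 2))
  have hane : ∀ n k, a n k ≠ 0 := by
    intro n k; rw [ha]; exact mul_ne_zero (ha0 k) (wne _ _ (hx k))
  have hbne : ∀ n k, b n k ≠ 0 := by
    intro n k; rw [hb]; exact mul_ne_zero (hb0 k) (inv_ne_zero (wne _ _ (hX k)))
  have hA0' : A0 = cauHL L R a0 := by ext j k; rw [hA0]; rfl
  have hB0' : B0 = cauHL R L b0 := by ext j k; rw [hB0]; rfl
  have hM' : M = cauHL L R 1 := by ext j k; rw [hM]; rfl
  have hA' : ∀ n, A n = cauHL L R (a n) := by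
    intro n; rw [hA, hA0', ha, cauHL_diag]; rfl
  have hB' : ∀ n, B n = cauHL R L (b n) := by
    intro n; rw [hB, hB0', hb, cauHL_diag]
    congr 2; funext k
    simp only [wHL, mul_inv, ← _root_.zpow_neg, neg_sub]
  have uM : IsUnit M.det := hM' ▸ cauHL_det L R 1 hLR hL hR (by simp)
  have uA0 : IsUnit A0.det := hA0' ▸ cauHL_det L R a0 hLR hL hR ha0
  have uB0 : IsUnit B0.det := hB0' ▸ cauHL_det R L b0 hRL hR hL hb0
  have uA : ∀ n, IsUnit (A n).det := fun n => hA' n ▸ cauHL_det L R _ hLR hL hR (hane n)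
  have uB : ∀ n, IsUnit (B n).det := fun n => hB' n ▸ cauHL_det R L _ hRL hR hL (hbne n)
  have ht : ∀ n, tauHL L R (a n) (b n) := by
    intro n
    unfold tauHL
    rw [← hA', ← hB']
    have h1 : (1 + B n * A n) = ((A n)⁻¹ + B n) * A n := by
      rw [add_mul, nonsing_inv_mul _ (uA n)]
    rw [h1, det_mul]
    exact (hinv1 n).mul (uA n)
  have hq : ∀ n, ∑ j : Fin s, ∑ k : Fin s, (M⁻¹ * ((A n)⁻¹ + B n)⁻¹) j k
      = qHL L R (a n) (b n) := by
    intro n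
    rw [sumHL M (A n) (B n) (a n) uM _ (uA n), hA', hB']; rfl
    rw [hA', hM', ← cauHL_diag]; congr 1; funext k; simp
  have hr : ∀ n, ∑ j : Fin s, ∑ k : Fin s, ((Mᵀ)⁻¹ * (A n + (B n)⁻¹)⁻¹) j k
      = -qHL R L (b n) (a n) := by
    intro n
    rw [add_comm (A n), sumHL Mᵀ (B n) (A n) (-b n) (by rwa [det_transpose]) _ (uB n), hA', hB']
    · simp [qHL, evHL]
    · ext j k
      rw [hB', hM', mul_diagonal]
      have h1 : L k - R j ≠ 0 := sub_ne_zero.2 (hLR _ _)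
      have h2 : R j - L k ≠ 0 := sub_ne_zero.2 (hRL _ _)
      simp [cauHL]
      field_simp
      ring
  have hrne : ∀ n, qHL R L (b n) (a n) ≠ 0 := by
    intro n h
    apply hscal n
    rw [hr, h, neg_zero]
  refine ⟨⟨uM, uA0, uB0⟩, ?_, ?_⟩
  · intro m hm
    have key := fun i : Fin 3 => coreHL L R (a m) (b m) hLR (α (i + 1)) (α (i + 2))
      (fun k => hLα k _) (fun k => hLα k _) (a (m - eHL (i + 1))) (a (m - eHL (i + 2)))
      (a (m + eHL i)) (b (m - eHL (i + 1))) (b (m - eHL (i + 2))) (b (m + eHL i))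
      (fun k => by simp only [ha]; rw [wHL_sub _ (hx k) m hm]; ring)
      (fun k => by simp only [ha]; rw [wHL_sub _ (hx k) m hm]; ring)
      (fun k => by simp only [ha]; rw [wHL_add _ (hx k) m hm]; ring)
      (fun k => by simp only [hb]; rw [wHL_sub _ (hX k) m hm, mul_inv]; ring)
      (fun k => by simp only [hb]; rw [wHL_sub _ (hX k) m hm, mul_inv]; ring)
      (fun k => by simp only [hb]; rw [wHL_add _ (hX k) m hm, mul_inv, mul_inv]; ring)
      (ht _) (ht _) (ht _) (ht _)
    have fin := finPlus α (fun i => qHL R L (b (m - eHL i)) (a (m - eHL i)))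
      (fun i => qHL R L (b (m + eHL i)) (a (m + eHL i))) (qHL L R (a m) (b m))
      (fun i => hrne _) (fun i => (key i).1) (fun i => (key i).2)
    have hu : ∀ i, u (m + eHL i) = (-qHL R L (b (m + eHL i)) (a (m + eHL i)))⁻¹ := by
      intro i
      rw [hun, hr]
      have := eHL_sum i
      simp only [Prod.fst_add, Prod.snd_add]; omega
    simp only [hu, hup m hm, hq]
    exact fin
  · intro m hm
    have key := fun i : Fin 3 => coreHL R L (b m) (a m) hRL (α (i + 1)) (α (i + 2))
      (fun k => hRα k _) (fun k => hRα k _) (b (m + eHL (i + 1))) (b (m + eHL (i + 2)))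
      (b (m - eHL i)) (a (m + eHL (i + 1))) (a (m + eHL (i + 2))) (a (m - eHL i))
      (fun k => by simp only [hb]; rw [wHL_add' _ (hX k) m hm, mul_inv, inv_inv]; ring)
      (fun k => by simp only [hb]; rw [wHL_add' _ (hX k) m hm, mul_inv, inv_inv]; ring)
      (fun k => by simp only [hb]; rw [wHL_sub' _ (hX k) m hm, mul_inv, mul_inv, inv_inv, inv_inv]; ring)
      (fun k => by simp only [ha]; rw [wHL_add' _ (hx k) m hm]; ring)
      (fun k => by simp only [ha]; rw [wHL_add' _ (hx k) m hm]; ring)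
      (fun k => by simp only [ha]; rw [wHL_sub' _ (hx k) m hm]; ring)
      (tauHL_swap (ht _)) (tauHL_swap (ht _)) (tauHL_swap (ht _)) (tauHL_swap (ht _))
    have fin := finMinus α (fun i => qHL L R (a (m + eHL i)) (b (m + eHL i)))
      (fun i => qHL L R (a (m - eHL i)) (b (m - eHL i))) (qHL R L (b m) (a m))
      (hrne _) (fun i => (key i).1) (fun i => (key i).2)
    have hu : ∀ i, u (m - eHL i) = qHL L R (a (m - eHL i)) (b (m - eHL i)) := by
      intro i
      rw [hup, hq]
      have := eHL_sum i
      simp only [Prod.fst_sub, Prod.snd_sub]; omega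
    simp only [hu, hun m hm, hr]
    exact fin
end
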